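/- Let I be a finite nonempty set of composite jobs with processing times q_J ≥ 0 and weights ω_J ≥ 0, and let ⪯ be the reflexive-transitive ancestor order of an out-forest on I (every element has at most one immediate predecessor). For a linear order σ on I, let C_J(σ) = ∑_{J' : J' ⪯_σ J} q_{J'} and E_J(σ) = max_{J' ⪯ J} C_{J'}(σ). Then there exists a linear order σ* minimizing ∑_J ω_J·E_J(σ) over all linear orders of I that is a linear extension of ⪯, i.e., J' ⪯ J implies J' ⪯_{σ*} J. -/

import Mathlib

/-!
Any linear order `s` can be replaced by a linear extension of `≤` under which no energization time
grows (`exists_extension_energComp_le`). Let `m K` be the `s`-latest predecessor of `K`. Sort the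
jobs by `m K` in the order `s`, and break ties by a fixed linear extension of `≤`. Since `m` is
monotone, this is a linear extension `t` of `≤`. Every job `K'` with `t K' K` satisfies
`K' ⪯_s m K' ⪯_s m K`, so the completion time of `K` under `t` is at most that of `m K` under `s`,
which is at most the energization time of `K` under `s`. There are finitely many linear orders, so
the best linear extension is optimal among all of them.
-/

open scoped Classical in
/-- Completion time of composite job `K` under the linear (list) order `s`:
the sum of the processing times of `K` and of all composite jobs preceding it. -/
noncomputable def Cpi {I : Type*} [Fintype I] (q : I → ℝ)
    (s : I → I → Prop) (K : I) : ℝ :=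
  ∑ K' ∈ Finset.univ.filter (fun K' => s K' K), q K'

/-- Energization time of composite job `K` under the linear order `s`:
the maximum completion time among its predecessors (including itself) in the
group soft precedence order. -/
noncomputable def energComp {I : Type*} [Fintype I] [PartialOrder I]
    (q : I → ℝ) (s : I → I → Prop) (K : I) : ℝ :=
  ⨆ K' : {K' : I // K' ≤ K}, Cpi q s K'.1

lemma Cpi_le_energComp {I : Type*} [Fintype I] [PartialOrder I] (q : I → ℝ)
    (s : I → I → Prop) {K K' : I} (h : K' ≤ K) : Cpi q s K' ≤ energComp q s K :=
  le_ciSup (f := fun K' : {K' : I // K' ≤ K} => Cpi q s K'.1)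
    (Set.finite_range _).bddAbove ⟨K', h⟩

open scoped Classical in
/-- A linear order on a finite type is represented by a natural-number rank. -/
lemma exists_rank {I : Type*} [Fintype I] (s : I → I → Prop) (hs : IsLinearOrder I s) :
    ∃ f : I → ℕ, ∀ a b, s a b ↔ f a ≤ f b := by
  -- The rank of `a` counts the elements up to and including `a`.
  refine ⟨fun a => (Finset.univ.filter (fun x => s x a)).card, fun a b => ⟨fun h => ?_, fun h => ?_⟩⟩
  · refine Finset.card_le_card fun x hx => ?_
    simp only [Finset.mem_filter, Finset.mem_univ, true_and] at hx ⊢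
    exact hs.trans _ _ _ hx h
  · by_contra hab
    have hba : s b a := (hs.total a b).resolve_left hab
    refine absurd h (not_le.2 (Finset.card_lt_card ?_))
    rw [Finset.ssubset_iff_of_subset]
    · exact ⟨a, by simpa using hs.refl a, by simpa using hab⟩
    · intro x hx
      simp only [Finset.mem_filter, Finset.mem_univ, true_and] at hx ⊢
      exact hs.trans _ _ _ hx hba

/-- Every linear order is dominated, energization time by energization time, by some linear
extension of `≤`. -/
lemma exists_extension_energComp_le {I : Type*} [Fintype I] [PartialOrder I]
    (q : I → ℝ) (hq : ∀ K, 0 ≤ q K) (s : I → I → Prop) (hs : IsLinearOrder I s) :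
    ∃ t : I → I → Prop, IsLinearOrder I t ∧ (∀ K K' : I, K' ≤ K → t K' K) ∧
      ∀ K, energComp q t K ≤ energComp q s K := by
  classical
  obtain ⟨f, hf⟩ := exists_rank s hs
  obtain ⟨e, he, hle⟩ := extend_partialOrder ((· ≤ ·) : I → I → Prop)
  have hm : ∀ K, ∃ M, M ≤ K ∧ ∀ K', K' ≤ K → f K' ≤ f M := by
    intro K
    obtain ⟨M, hM, h⟩ := Finset.exists_max_image (Finset.univ.filter (fun x => x ≤ K)) f
      ⟨K, by simp⟩
    exact ⟨M, by simpa using hM, fun K' hK' => h K' (by simpa using hK')⟩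
  choose m hmle hmax using hm
  let t : I → I → Prop := fun a b => f (m a) < f (m b) ∨ (f (m a) = f (m b) ∧ e a b)
  have htm : ∀ a b, t a b → f (m a) ≤ f (m b) := fun a b h => h.elim le_of_lt fun h => h.1.le
  refine ⟨t, ?_, ?_, ?_⟩
  · exact
      { refl := fun a => Or.inr ⟨rfl, he.refl a⟩
        trans := by
          rintro a b c (h | ⟨h, h'⟩) (k | ⟨k, k'⟩)
          · exact Or.inl (h.trans k)
          · exact Or.inl (k ▸ h)
          · exact Or.inl (h ▸ k)
          · exact Or.inr ⟨h.trans k, he.trans _ _ _ h' k'⟩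
        antisymm := by
          rintro a b (h | ⟨h, h'⟩) (k | ⟨k, k'⟩)
          · omega
          · omega
          · omega
          · exact he.antisymm _ _ h' k'
        total := by
          intro a b
          rcases lt_trichotomy (f (m a)) (f (m b)) with h | h | h
          · exact Or.inl (Or.inl h)
          · exact (he.total a b).imp (fun k => Or.inr ⟨h, k⟩) fun k => Or.inr ⟨h.symm, k⟩
          · exact Or.inr (Or.inl h) }
  · intro K K' h
    exact (hmax K (m K') ((hmle K').trans h)).lt_or_eq.imp id fun k => ⟨k, hle _ _ h⟩
  · intro K
    have : Nonempty {K' : I // K' ≤ K} := ⟨⟨K, le_rfl⟩⟩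
    refine ciSup_le fun ⟨K', hK'⟩ => ?_
    refine le_trans ?_ (Cpi_le_energComp q s ((hmle K').trans hK'))
    refine Finset.sum_le_sum_of_subset_of_nonneg (fun x hx => ?_) fun x _ _ => hq x
    simp only [Finset.mem_filter, Finset.mem_univ, true_and] at hx ⊢
    exact (hf _ _).2 ((hmax x x le_rfl).trans (htm _ _ hx))

/-- If `≤` is the ancestor order of an out-forest on the composite
jobs (the predecessors of any element form a chain), then some linear order
minimizing `∑_J ω_J E_J(σ)` over all linear orders is a linear extension of `≤`. -/
theorem exists_optimal_linear_extension {I : Type*} [Fintype I] [Nonempty I]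
    [PartialOrder I]
    (hforest : ∀ K K1 K2 : I, K1 ≤ K → K2 ≤ K → K1 ≤ K2 ∨ K2 ≤ K1)
    (q ω : I → ℝ) (hq : ∀ K, 0 ≤ q K) (hω : ∀ K, 0 ≤ ω K) :
    ∃ s : I → I → Prop, IsLinearOrder I s ∧
      (∀ s' : I → I → Prop, IsLinearOrder I s' →
        ∑ K, ω K * energComp q s K ≤ ∑ K, ω K * energComp q s' K) ∧
      (∀ K K' : I, K' ≤ K → s K' K) := by
  obtain ⟨e, he, hle⟩ := extend_partialOrder ((· ≤ ·) : I → I → Prop)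
  obtain ⟨s, ⟨hs, hext⟩, hmin⟩ := Set.exists_min_image
    {s : I → I → Prop | IsLinearOrder I s ∧ ∀ K K' : I, K' ≤ K → s K' K}
    (fun s => ∑ K, ω K * energComp q s K) (Set.toFinite _) ⟨e, he, fun _ _ h => hle _ _ h⟩
  refine ⟨s, hs, fun s' hs' => ?_, hext⟩
  obtain ⟨t, ht, htext, hts⟩ := exists_extension_energComp_le q hq s' hs'
  exact (hmin t ⟨ht, htext⟩).trans
    (Finset.sum_le_sum fun K _ => mul_le_mul_of_nonneg_left (hts K) (hω K))
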